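/- arXiv:2105.07177 — 3 statements merged into one kernel-verified Lean document; each statement's English description precedes it below -/
import Mathlib

section
/- Every skew-symmetric 7×7 complex matrix is the sum of an element of ι₆(so(6,ℂ)) and an element of g₂; that is, ι₆(so(6,ℂ)) + g₂ = so(7,ℂ) as linear subspaces. -/
/-!
Only the fourth column matters: `ι₆(so(6))` is exactly the set of skew-symmetric matrices whose
fourth row and column vanish, while the fourth column of `{a}¹ + {b}²` is `(2a, 0, 2b)`, which runs
over all vectors with zero fourth entry. So for skew-symmetric `X` one reads off `a` and `b` as half
of its fourth column, and `X - {a}¹ - {b}²` lies in `ι₆(so(6))` (with `A = 0` in `g₂`). Conversely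
every summand is skew-symmetric (`iota6_skew`, `phi_skew`, `m1_skew`, `m2_skew`).
-/

open Matrix

noncomputable def crossMat (x : Fin 3 → ℂ) : Matrix (Fin 3) (Fin 3) ℂ :=
  !![0, -x 2, x 1;
     x 2, 0, -x 0;
     -x 1, x 0, 0]

/-- `sl(3,ℂ)`: the traceless 3×3 complex matrices. -/
def sl3 : Set (Matrix (Fin 3) (Fin 3) ℂ) := {A | A.trace = 0}

/-- `φ(A) = [[K, -S],[S, K]]` with `K = (A - Aᵀ)/2`, `S = (A + Aᵀ)/2`. -/
noncomputable def phi (A : Matrix (Fin 3) (Fin 3) ℂ) :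
    Matrix (Fin 3 ⊕ Fin 3) (Fin 3 ⊕ Fin 3) ℂ :=
  Matrix.fromBlocks (((1 : ℂ)/2) • (A - Aᵀ)) (-(((1 : ℂ)/2) • (A + Aᵀ)))
    (((1 : ℂ)/2) • (A + Aᵀ)) (((1 : ℂ)/2) • (A - Aᵀ))

/-- Index type for 7×7 matrices, with rows/columns grouped in sizes (3,1,3). -/
abbrev I7 := Fin 3 ⊕ (Fin 1 ⊕ Fin 3)

/-- `{a}¹ = [[0, 2a, [a]], [-2aᵀ, 0, 0], [[a], 0, 0]]`. -/
noncomputable def m1 (a : Fin 3 → ℂ) : Matrix I7 I7 ℂ :=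
  Matrix.of fun i j =>
    match i, j with
    | .inl _, .inl _ => 0
    | .inl i, .inr (.inl _) => 2 * a i
    | .inl i, .inr (.inr j) => crossMat a i j
    | .inr (.inl _), .inl j => -(2 * a j)
    | .inr (.inl _), .inr _ => 0
    | .inr (.inr i), .inl j => crossMat a i j
    | .inr (.inr _), .inr _ => 0

/-- `{b}² = [[[b], 0, 0], [0, 0, -2bᵀ], [0, 2b, -[b]]]`. -/
noncomputable def m2 (b : Fin 3 → ℂ) : Matrix I7 I7 ℂ :=
  Matrix.of fun i j =>
    match i, j with
    | .inl i, .inl j => crossMat b i j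
    | .inl _, .inr _ => 0
    | .inr (.inl _), .inl _ => 0
    | .inr (.inl _), .inr (.inl _) => 0
    | .inr (.inl _), .inr (.inr j) => -(2 * b j)
    | .inr (.inr _), .inl _ => 0
    | .inr (.inr i), .inr (.inl _) => 2 * b i
    | .inr (.inr i), .inr (.inr j) => -(crossMat b i j)

/-- `ι₆` : embed a 6×6 matrix into rows and columns {1,2,3,5,6,7} of a 7×7 matrix,
whose fourth row and column are zero. -/
noncomputable def iota6 (M : Matrix (Fin 3 ⊕ Fin 3) (Fin 3 ⊕ Fin 3) ℂ) :
    Matrix I7 I7 ℂ :=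
  Matrix.of fun i j =>
    match i, j with
    | .inl i, .inl j => M (.inl i) (.inl j)
    | .inl i, .inr (.inr j) => M (.inl i) (.inr j)
    | .inr (.inr i), .inl j => M (.inr i) (.inl j)
    | .inr (.inr i), .inr (.inr j) => M (.inr i) (.inr j)
    | _, _ => 0

/-- `g₂ = { ι₆(φ(A)) + {a}¹ + {b}² : A ∈ sl(3,ℂ), a b ∈ ℂ³ }`. -/
noncomputable def g2set : Set (Matrix I7 I7 ℂ) :=
  {X | ∃ (A : Matrix (Fin 3) (Fin 3) ℂ) (a b : Fin 3 → ℂ),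
    A.trace = 0 ∧ X = iota6 (phi A) + m1 a + m2 b}

theorem crossMat_skew (x : Fin 3 → ℂ) (i j : Fin 3) : crossMat x j i = -crossMat x i j := by
  fin_cases i <;> fin_cases j <;> simp [crossMat]

theorem m1_skew (a : Fin 3 → ℂ) : (m1 a)ᵀ = -m1 a := by
  ext i j
  rcases i with i | i | i <;> rcases j with j | j | j <;> simp [m1] <;>
    exact crossMat_skew _ _ _

theorem m2_skew (b : Fin 3 → ℂ) : (m2 b)ᵀ = -m2 b := by
  ext i j
  rcases i with i | i | i <;> rcases j with j | j | j <;> simp [m2] <;>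
    first | exact crossMat_skew _ _ _ | exact (crossMat_skew _ _ _).symm

theorem iota6_skew {M : Matrix (Fin 3 ⊕ Fin 3) (Fin 3 ⊕ Fin 3) ℂ} (hM : Mᵀ = -M) :
    (iota6 M)ᵀ = -iota6 M := by
  have h : ∀ i j, M j i = -M i j := fun i j => congrFun (congrFun hM i) j
  ext i j
  rcases i with i | i | i <;> rcases j with j | j | j <;> simp [iota6] <;> exact h _ _

theorem phi_skew (A : Matrix (Fin 3) (Fin 3) ℂ) : (phi A)ᵀ = -phi A := by
  ext i j
  rcases i with i | i <;> rcases j with j | j <;> simp [phi] <;> ring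

/-- A skew-symmetric matrix whose fourth column vanishes comes from `so(6)`. -/
theorem exists_iota6_eq {Z : Matrix I7 I7 ℂ} (hZ : Zᵀ = -Z)
    (hcol : ∀ i, Z i (.inr (.inl 0)) = 0) :
    ∃ M : Matrix (Fin 3 ⊕ Fin 3) (Fin 3 ⊕ Fin 3) ℂ, Mᵀ = -M ∧ iota6 M = Z := by
  have h : ∀ i j, Z j i = -Z i j := fun i j => congrFun (congrFun hZ i) j
  have hrow : ∀ j, Z (.inr (.inl 0)) j = 0 := fun j => by rw [h j, hcol, neg_zero]
  let e : Fin 3 ⊕ Fin 3 → I7 := Sum.map id Sum.inr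
  refine ⟨Z.submatrix e e, ?_, ?_⟩
  · ext i j
    exact h (e i) (e j)
  · ext i j
    rcases i with i | i | i <;> rcases j with j | j | j <;>
      simp [iota6, e, Fin.fin_one_eq_zero, hcol, hrow]

/-- Every skew-symmetric 7×7 complex matrix is the sum of an element of `ι₆(so(6,ℂ))`
and an element of `g₂`: `ι₆(so(6,ℂ)) + g₂ = so(7,ℂ)` as linear subspaces. -/
theorem stmt10 :
    {X : Matrix I7 I7 ℂ | ∃ M : Matrix (Fin 3 ⊕ Fin 3) (Fin 3 ⊕ Fin 3) ℂ,
        Mᵀ = -M ∧ ∃ Y ∈ g2set, X = iota6 M + Y} =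
      {X : Matrix I7 I7 ℂ | Xᵀ = -X} := by
  ext X
  constructor
  · rintro ⟨M, hM, _, ⟨A, a, b, -, rfl⟩, rfl⟩
    simp only [Set.mem_ofPred_eq, transpose_add, iota6_skew hM, iota6_skew (phi_skew A),
      m1_skew, m2_skew]
    abel
  · intro hX
    replace hX : Xᵀ = -X := hX
    have h : ∀ i j, X j i = -X i j := fun i j => congrFun (congrFun hX i) j
    let a : Fin 3 → ℂ := fun i => X (.inl i) (.inr (.inl 0)) / 2
    let b : Fin 3 → ℂ := fun i => X (.inr (.inr i)) (.inr (.inl 0)) / 2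
    have hZ : (X - m1 a - m2 b)ᵀ = -(X - m1 a - m2 b) := by
      simp only [transpose_sub, hX, m1_skew, m2_skew]
      abel
    have hcol : ∀ i, (X - m1 a - m2 b) i (.inr (.inl 0)) = 0 := by
      rintro (i | i | i)
      · simp [m1, m2, a]
        ring
      · have hdiag := self_eq_neg.mp (h (.inr (.inl 0)) (.inr (.inl 0)))
        simp [m1, m2, Fin.fin_one_eq_zero i, hdiag]
      · simp [m1, m2, b]
        ring
    obtain ⟨M, hM, hMZ⟩ := exists_iota6_eq hZ hcol
    have h0 : iota6 (phi 0) = 0 := by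
      ext i j
      rcases i with i | i | i <;> rcases j with j | j | j <;> simp [iota6, phi]
    refine ⟨M, hM, _, ⟨0, a, b, trace_zero _ _, rfl⟩, ?_⟩
    rw [hMZ, h0]
    abel
end

section
/- The restriction of the trace form B(X,Y) = tr(XY) to the subspace g₂ of so(7,ℂ) is nondegenerate: if X ∈ g₂ satisfies tr(XY) = 0 for all Y ∈ g₂, then X = 0. -/
/-!
In the parametrization of `g₂` by triples `(A, a, b)`, the trace form is
`-2 tr(A A'ᵀ) - 12 a ⬝ a' - 12 b ⬝ b'`: the three summands of `g₂` are mutually orthogonal, and on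
each of them the form is a nonzero multiple of the standard symmetric bilinear form
(`trace_g2_mul`). Pairing `X = (A, a, b)` with the entrywise complex conjugates of `A`, `a` and `b`
in turn, which stay in `g₂` because conjugation preserves tracelessness, gives the vanishing of the
Hermitian square norms of `A`, `a` and `b`.
-/

open Matrix

/-- The trace form of `g₂` in the coordinates `(A, a, b)`. -/
theorem trace_g2_mul (A A' : Matrix (Fin 3) (Fin 3) ℂ) (a b a' b' : Fin 3 → ℂ) :
    ((iota6 (phi A) + m1 a + m2 b) * (iota6 (phi A') + m1 a' + m2 b')).trace =
      -2 * (A * A'ᵀ).trace - 12 * (a ⬝ᵥ a') - 12 * (b ⬝ᵥ b') := by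
  simp only [Matrix.trace, Matrix.diag_apply, Matrix.mul_apply, Fintype.sum_sum_type,
    Fin.sum_univ_three, Finset.univ_unique, Finset.sum_singleton, Matrix.add_apply, iota6, m1, m2,
    Matrix.of_apply, phi, Matrix.fromBlocks_apply₁₁, Matrix.fromBlocks_apply₁₂,
    Matrix.fromBlocks_apply₂₁, Matrix.fromBlocks_apply₂₂, Matrix.smul_apply, Matrix.sub_apply,
    Matrix.neg_apply, Matrix.transpose_apply, smul_eq_mul, dotProduct]
  simp only [crossMat, Matrix.of_apply, Matrix.cons_val]
  ring

theorem iota6_phi_zero : iota6 (phi 0) = 0 := by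
  ext (i | i | i) (j | j | j) <;> simp [iota6, phi]

theorem crossMat_zero : crossMat 0 = 0 := by
  ext i j
  fin_cases i <;> fin_cases j <;> simp [crossMat]

theorem m1_zero : m1 0 = 0 := by
  ext (i | i | i) (j | j | j) <;> simp [m1, crossMat_zero]

theorem m2_zero : m2 0 = 0 := by
  ext (i | i | i) (j | j | j) <;> simp [m2, crossMat_zero]

open scoped ComplexOrder in
/-- The trace form `B(X,Y) = tr(XY)` is nondegenerate on `g₂`. -/
theorem stmt11 (X : Matrix I7 I7 ℂ) (hX : X ∈ g2set)
    (h : ∀ Y ∈ g2set, (X * Y).trace = 0) : X = 0 := by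
  obtain ⟨A, a, b, hA, rfl⟩ := hX
  have key : ∀ (A' : Matrix (Fin 3) (Fin 3) ℂ) (a' b' : Fin 3 → ℂ), A'.trace = 0 →
      -2 * (A * A'ᵀ).trace - 12 * (a ⬝ᵥ a') - 12 * (b ⬝ᵥ b') = 0 := by
    intro A' a' b' hA'
    rw [← trace_g2_mul]
    exact h _ ⟨A', a', b', hA', rfl⟩
  have hA0 : A = 0 := by
    -- `Aᴴᵀ` is the entrywise conjugate of `A`.
    have := key Aᴴᵀ 0 0 (by rw [trace_transpose, trace_conjTranspose, hA, star_zero])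
    rw [← trace_mul_conjTranspose_self_eq_zero_iff]
    simpa using this
  have ha0 : a = 0 := by
    rw [← dotProduct_self_star_eq_zero]
    simpa using key 0 (star a) 0 (by simp)
  have hb0 : b = 0 := by
    rw [← dotProduct_self_star_eq_zero]
    simpa using key 0 0 (star b) (by simp)
  rw [hA0, ha0, hb0, iota6_phi_zero, m1_zero, m2_zero, add_zero, add_zero]
end

section
/- Define h : ℂ³ ⊕ ℂ³ → so(6,ℂ) by letting h(a,b) be one half of the 2×2 block matrix [[ [b], [a] ],[ [a], −[b] ]] with 3×3 blocks. Then h is equivariant for the action of sl(3,ℂ) through φ: for every A ∈ sl(3,ℂ) and every (a,b) ∈ ℂ³ ⊕ ℂ³, the commutator [φ(A), h(a,b)] equals h(c,d), where (c,d) is the image of (a,b) under the matrix φ(A) acting on ℂ⁶ = ℂ³ ⊕ ℂ³. -/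
/-!
Every `M` satisfies `[M v] = tr(M) [v] - Mᵀ [v] - [v] M` (`crossMat_mulVec`). Hence a skew `K`
acts by `[K v] = K [v] - [v] K`, and a traceless symmetric `S` by `[S v] = -(S [v] + [v] S)`.
Multiplying out the commutator of `φ(A)` with `h(a,b)` blockwise gives exactly these commutators
of `K` and anticommutators of `S`, and they assemble to `[K a - S b]` and `[S a + K b]`.
The hypothesis `tr A = 0` enters only as `tr S = 0`.
-/

open Matrix

/-- `h(a,b) = ½ [[ [b], [a] ],[ [a], -[b] ]]`. -/
noncomputable def hMap (a b : Fin 3 → ℂ) : Matrix (Fin 3 ⊕ Fin 3) (Fin 3 ⊕ Fin 3) ℂ :=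
  ((1 : ℂ)/2) • Matrix.fromBlocks (crossMat b) (crossMat a) (crossMat a) (-(crossMat b))

/-- The infinitesimal form of `Mᵀ [M v] M = det M • [v]`. -/
lemma crossMat_mulVec (M : Matrix (Fin 3) (Fin 3) ℂ) (v : Fin 3 → ℂ) :
    crossMat (M *ᵥ v) = M.trace • crossMat v - Mᵀ * crossMat v - crossMat v * M := by
  ext i j
  fin_cases i <;> fin_cases j <;>
    simp [crossMat, Matrix.mul_apply, Matrix.mulVec, dotProduct, Matrix.vecMul,
      Fin.sum_univ_three, Matrix.trace] <;> ring

lemma crossMat_add (v w : Fin 3 → ℂ) : crossMat (v + w) = crossMat v + crossMat w := by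
  ext i j
  fin_cases i <;> fin_cases j <;> simp [crossMat] <;> ring

/-- A skew-symmetric matrix acts on cross-product matrices by commutator. -/
lemma crossMat_mulVec_skew {K : Matrix (Fin 3) (Fin 3) ℂ} (hK : Kᵀ = -K) (v : Fin 3 → ℂ) :
    crossMat (K *ᵥ v) = K * crossMat v - crossMat v * K := by
  have ht : K.trace = 0 := by
    have h := congrArg Matrix.trace hK
    rw [Matrix.trace_transpose, Matrix.trace_neg] at h
    exact self_eq_neg.mp h
  rw [crossMat_mulVec, hK, ht]
  simp

/-- A traceless symmetric matrix acts on cross-product matrices by minus the anticommutator. -/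
lemma crossMat_mulVec_symm {S : Matrix (Fin 3) (Fin 3) ℂ} (hS : Sᵀ = S) (ht : S.trace = 0)
    (v : Fin 3 → ℂ) :
    crossMat (S *ᵥ v) = -(S * crossMat v + crossMat v * S) := by
  rw [crossMat_mulVec, hS, ht, zero_smul]
  abel

/-- `h` is equivariant for the action of `sl(3,ℂ)` through `φ`:
`[φ(A), h(a,b)] = h(c,d)` where `(c,d) = φ(A)(a,b)`. -/
theorem stmt13 (A : Matrix (Fin 3) (Fin 3) ℂ) (hA : A.trace = 0) (a b : Fin 3 → ℂ) :
    phi A * hMap a b - hMap a b * phi A =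
      hMap (fun i => (phi A *ᵥ Sum.elim a b) (Sum.inl i))
           (fun i => (phi A *ᵥ Sum.elim a b) (Sum.inr i)) := by
  have hK : (((1 : ℂ)/2) • (A - Aᵀ))ᵀ = -(((1 : ℂ)/2) • (A - Aᵀ)) := by
    simp [Matrix.transpose_sub, ← smul_neg]
  have hS : (((1 : ℂ)/2) • (A + Aᵀ))ᵀ = ((1 : ℂ)/2) • (A + Aᵀ) := by
    simp [Matrix.transpose_add, add_comm]
  have ht : (((1 : ℂ)/2) • (A + Aᵀ)).trace = 0 := by
    simp [Matrix.trace_add, hA]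
  unfold phi
  generalize ((1 : ℂ)/2) • (A - Aᵀ) = K at *
  generalize ((1 : ℂ)/2) • (A + Aᵀ) = S at *
  have hnS : (-S)ᵀ = -S := by rw [Matrix.transpose_neg, hS]
  have hnt : (-S).trace = 0 := by rw [Matrix.trace_neg, ht, neg_zero]
  have hc : (fun i => (fromBlocks K (-S) S K *ᵥ Sum.elim a b) (Sum.inl i))
      = K *ᵥ a + (-S) *ᵥ b := by
    ext i; simp [Matrix.fromBlocks_mulVec]
  have hd : (fun i => (fromBlocks K (-S) S K *ᵥ Sum.elim a b) (Sum.inr i))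
      = S *ᵥ a + K *ᵥ b := by
    ext i; simp [Matrix.fromBlocks_mulVec]
  rw [hc, hd]
  unfold hMap
  rw [crossMat_add, crossMat_add, crossMat_mulVec_skew hK, crossMat_mulVec_skew hK,
    crossMat_mulVec_symm hS ht, crossMat_mulVec_symm hnS hnt, Matrix.mul_smul, Matrix.smul_mul,
    ← smul_sub, Matrix.fromBlocks_multiply, Matrix.fromBlocks_multiply,
    sub_eq_add_neg, Matrix.fromBlocks_neg, Matrix.fromBlocks_add]
  congr 2 <;> noncomm_ring
end
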